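/- arXiv:2410.08910 — 3 statements merged into one kernel-verified Lean document; each statement's English description precedes it below -/
import Mathlib

section
/- Let Ω ⊂ ℝⁿ be a bounded open set, T > 0, and let k ∈ C¹([0,T];ℝ) with γ(t) = k(t)k'(t). Then the sesquilinear form a_L is continuous and satisfies a Gårding inequality uniformly in t: there exist constants C > 0 and λ₀ > 0 such that for all t ∈ [0,T] and all u, w ∈ C_c^∞(Ω;ℂ), (i) |a_L(t;u,w)| ≤ C‖u‖_{H¹}‖w‖_{H¹}, and (ii) Re a_L(t;u,u) + λ₀‖u‖²_{L²(Ω)} ≥ (1/2)‖∇u‖²_{L²(Ω)}, where ‖u‖²_{H¹} = ‖u‖²_{L²(Ω)} + ‖∇u‖²_{L²(Ω)}. -/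
/-!
Since `Ω` lies in a ball of radius `R` about `0`, Cauchy–Schwarz bounds the drift term by
`|γ| R ‖∇u‖ ‖w‖` in `L²`, so it is of first order only. This gives continuity at once. For `w = u`,
Young's inequality `|γ| R ‖∇u‖ ‖u‖ ≤ ‖∇u‖² / 2 + (|γ| R)² ‖u‖² / 2` lets the principal term
`‖∇u‖²` absorb the drift at the price of a multiple of `‖u‖²`. Uniformity in `t` is the boundedness
of `k k'` on `[0, T]`.
-/

open MeasureTheory Set

/-- The sum over coordinates of `∂u/∂yⱼ · conj(∂w/∂yⱼ)`, i.e. `∇u · conj ∇w`. -/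
noncomputable def gradDotConj (n : ℕ) (u w : EuclideanSpace ℝ (Fin n) → ℂ)
    (y : EuclideanSpace ℝ (Fin n)) : ℂ :=
  ∑ j : Fin n,
    fderiv ℝ u y (EuclideanSpace.single j 1) *
      starRingEnd ℂ (fderiv ℝ w y (EuclideanSpace.single j 1))

/-- The squared euclidean norm of the gradient of `u` at `y`. -/
noncomputable def gradNormSq (n : ℕ) (u : EuclideanSpace ℝ (Fin n) → ℂ)
    (y : EuclideanSpace ℝ (Fin n)) : ℝ :=
  ∑ j : Fin n, ‖fderiv ℝ u y (EuclideanSpace.single j 1)‖ ^ 2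

/-- The sesquilinear form `a_L(t; u, w) = (∇u, ∇w) + i γ(t) (y·∇u, w)`, where
`γ` is the real parameter `γ(t) = k(t) k'(t)`.  Note `y·∇u(y) = (fderiv ℝ u y) y`. -/
noncomputable def aL (n : ℕ) (γ : ℝ) (Ω : Set (EuclideanSpace ℝ (Fin n)))
    (u w : EuclideanSpace ℝ (Fin n) → ℂ) : ℂ :=
  (∫ y in Ω, gradDotConj n u w y) +
    Complex.I * (γ : ℂ) * ∫ y in Ω, fderiv ℝ u y y * starRingEnd ℂ (w y)

section CauchySchwarz

variable {α E F G : Type*} {m : MeasurableSpace α} {μ : Measure α}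
  [NormedAddCommGroup E] [NormedAddCommGroup F] [NormedAddCommGroup G] [NormedSpace ℝ G]

theorem integral_norm_mul_norm_le_sqrt_mul_sqrt {f : α → E} {g : α → F}
    (hf : MemLp f 2 μ) (hg : MemLp g 2 μ) :
    ∫ x, ‖f x‖ * ‖g x‖ ∂μ ≤ √(∫ x, ‖f x‖ ^ 2 ∂μ) * √(∫ x, ‖g x‖ ^ 2 ∂μ) := by
  have two_eq : ENNReal.ofReal 2 = 2 := by simp
  have holder := integral_mul_norm_le_Lp_mul_Lq Real.HolderConjugate.two_two
    (two_eq ▸ hf.norm) (two_eq ▸ hg.norm)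
  simpa only [norm_norm, Real.rpow_two, ← Real.sqrt_eq_rpow] using holder

theorem norm_integral_le_mul_sqrt_mul_sqrt {f : α → E} {g : α → F} {h : α → G} {M : ℝ}
    (hf : MemLp f 2 μ) (hg : MemLp g 2 μ) (hM : 0 ≤ M)
    (hh : ∀ᵐ x ∂μ, ‖h x‖ ≤ M * (‖f x‖ * ‖g x‖)) :
    ‖∫ x, h x ∂μ‖ ≤ M * (√(∫ x, ‖f x‖ ^ 2 ∂μ) * √(∫ x, ‖g x‖ ^ 2 ∂μ)) :=
  calc
    ‖∫ x, h x ∂μ‖ ≤ ∫ x, M * (‖f x‖ * ‖g x‖) ∂μ :=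
      norm_integral_le_of_norm_le ((hf.norm.integrable_mul hg.norm).const_mul M) hh
    _ = M * ∫ x, ‖f x‖ * ‖g x‖ ∂μ := integral_const_mul _ _
    _ ≤ M * (√(∫ x, ‖f x‖ ^ 2 ∂μ) * √(∫ x, ‖g x‖ ^ 2 ∂μ)) :=
      mul_le_mul_of_nonneg_left (integral_norm_mul_norm_le_sqrt_mul_sqrt hf hg) hM

end CauchySchwarz

theorem memLp_restrict_of_continuous_of_isBounded {X E : Type*} [PseudoMetricSpace X]
    [ProperSpace X] [MeasurableSpace X] [OpensMeasurableSpace X] [NormedAddCommGroup E]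
    [SecondCountableTopologyEither X E] {μ : Measure X} [IsFiniteMeasureOnCompacts μ]
    {f : X → E} {s : Set X} (hf : Continuous f) (hs : Bornology.IsBounded s) (p : ENNReal) :
    MemLp f p (μ.restrict s) := by
  have hcompact : IsCompact (closure s) := hs.isCompact_closure
  obtain ⟨C, hC⟩ := hcompact.exists_bound_of_continuousOn hf.continuousOn
  have : IsFiniteMeasure (μ.restrict (closure s)) :=
    isFiniteMeasure_restrict.2 hcompact.measure_lt_top.ne
  have hclosure : MemLp f p (μ.restrict (closure s)) :=
    .of_bound hf.aestronglyMeasurable C <|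
      ae_restrict_of_forall_mem isClosed_closure.measurableSet hC
  exact hclosure.mono_measure (Measure.restrict_mono_set μ subset_closure)

theorem norm_map_le_norm_mul_sqrt_sum {ι F : Type*} [Fintype ι] [DecidableEq ι]
    [SeminormedAddCommGroup F] [NormedSpace ℝ F] (A : EuclideanSpace ℝ ι →ₗ[ℝ] F)
    (v : EuclideanSpace ℝ ι) :
    ‖A v‖ ≤ ‖v‖ * √(∑ j, ‖A (EuclideanSpace.single j 1)‖ ^ 2) := by
  have expand : A v = ∑ j, v j • A (EuclideanSpace.single j 1) := by
    conv_lhs => rw [← (EuclideanSpace.basisFun ι ℝ).sum_repr v]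
    simp
  calc
    ‖A v‖ ≤ ∑ j, ‖v j‖ * ‖A (EuclideanSpace.single j 1)‖ := by
      simpa only [expand, norm_smul] using
        norm_sum_le Finset.univ fun j ↦ v j • A (EuclideanSpace.single j 1)
    _ ≤ ‖v‖ * √(∑ j, ‖A (EuclideanSpace.single j 1)‖ ^ 2) := by
      simpa only [EuclideanSpace.norm_eq] using Real.sum_mul_le_sqrt_mul_sqrt _ _ _

theorem exists_abs_mul_deriv_le {k : ℝ → ℝ} {s : Set ℝ} (hs : IsCompact s)
    (hsd : UniqueDiffOn ℝ s) (hk : ContDiffOn ℝ 1 k s) :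
    ∃ B, ∀ t ∈ s, |k t * deriv k t| ≤ B := by
  obtain ⟨B, hB⟩ := hs.exists_bound_of_continuousOn <|
    hk.continuousOn.mul (hk.continuousOn_derivWithin hsd le_rfl)
  refine ⟨B, fun t ht ↦ ?_⟩
  by_cases hd : DifferentiableAt ℝ k t
  · exact hd.derivWithin (hsd t ht) ▸ hB t ht
  · -- `deriv k t` has the junk value `0`, as can happen at an endpoint of an interval.
    simpa [deriv_zero_of_not_differentiableAt hd] using (norm_nonneg _).trans (hB t ht)

variable {n : ℕ} {Ω : Set (EuclideanSpace ℝ (Fin n))} {u w : EuclideanSpace ℝ (Fin n) → ℂ}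

/-- The gradient `∇u` as a vector field with values in `ℂⁿ`, so that `gradNormSq` and `gradDotConj`
become the norm and inner product of a Hilbert space. -/
noncomputable def complexGrad (u : EuclideanSpace ℝ (Fin n) → ℂ) (y : EuclideanSpace ℝ (Fin n)) :
    EuclideanSpace ℂ (Fin n) :=
  WithLp.toLp 2 fun j ↦ fderiv ℝ u y (EuclideanSpace.single j 1)

theorem gradNormSq_eq_norm_complexGrad_sq (u : EuclideanSpace ℝ (Fin n) → ℂ)
    (y : EuclideanSpace ℝ (Fin n)) : gradNormSq n u y = ‖complexGrad u y‖ ^ 2 := by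
  simp only [gradNormSq, complexGrad, EuclideanSpace.norm_sq_eq]

theorem gradDotConj_eq_inner (u w : EuclideanSpace ℝ (Fin n) → ℂ)
    (y : EuclideanSpace ℝ (Fin n)) :
    gradDotConj n u w y = inner ℂ (complexGrad w y) (complexGrad u y) := by
  simp only [gradDotConj, complexGrad, PiLp.inner_apply, RCLike.inner_apply]

theorem norm_fderiv_apply_le_norm_mul_norm_complexGrad (u : EuclideanSpace ℝ (Fin n) → ℂ)
    (y v : EuclideanSpace ℝ (Fin n)) : ‖fderiv ℝ u y v‖ ≤ ‖v‖ * ‖complexGrad u y‖ := by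
  simpa only [complexGrad, EuclideanSpace.norm_eq, ContinuousLinearMap.coe_coe] using
    norm_map_le_norm_mul_sqrt_sum (fderiv ℝ u y).toLinearMap v

theorem continuous_complexGrad (hu : ContDiff ℝ 1 u) : Continuous (complexGrad u) :=
  (PiLp.continuous_toLp 2 _).comp <| continuous_pi fun _ ↦
    (hu.continuous_fderiv one_ne_zero).clm_apply continuous_const

theorem integral_gradNormSq_nonneg (Ω : Set (EuclideanSpace ℝ (Fin n)))
    (u : EuclideanSpace ℝ (Fin n) → ℂ) : 0 ≤ ∫ y in Ω, gradNormSq n u y :=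
  integral_nonneg fun _ ↦ Finset.sum_nonneg fun _ _ ↦ sq_nonneg _

theorem integral_gradDotConj_self (Ω : Set (EuclideanSpace ℝ (Fin n)))
    (u : EuclideanSpace ℝ (Fin n) → ℂ) :
    ∫ y in Ω, gradDotConj n u u y = ((∫ y in Ω, gradNormSq n u y : ℝ) : ℂ) := by
  simp only [gradDotConj_eq_inner, gradNormSq_eq_norm_complexGrad_sq, inner_self_eq_norm_sq_to_K,
    ← integral_complex_ofReal, Complex.coe_algebraMap, Complex.ofReal_pow]

theorem norm_integral_gradDotConj_le (hu : MemLp (complexGrad u) 2 (volume.restrict Ω))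
    (hw : MemLp (complexGrad w) 2 (volume.restrict Ω)) :
    ‖∫ y in Ω, gradDotConj n u w y‖ ≤
      √(∫ y in Ω, gradNormSq n u y) * √(∫ y in Ω, gradNormSq n w y) := by
  have pointwise (y) : ‖gradDotConj n u w y‖ ≤ 1 * (‖complexGrad u y‖ * ‖complexGrad w y‖) := by
    rw [gradDotConj_eq_inner, one_mul, mul_comm]
    exact norm_inner_le_norm _ _
  simpa only [gradNormSq_eq_norm_complexGrad_sq, one_mul] using
    norm_integral_le_mul_sqrt_mul_sqrt hu hw zero_le_one (ae_of_all _ pointwise)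

theorem norm_integral_fderiv_mul_conj_le {R : ℝ} (hR : 0 ≤ R) (hΩ : Ω ⊆ Metric.closedBall 0 R)
    (hu : MemLp (complexGrad u) 2 (volume.restrict Ω)) (hw : MemLp w 2 (volume.restrict Ω)) :
    ‖∫ y in Ω, fderiv ℝ u y y * starRingEnd ℂ (w y)‖ ≤
      R * (√(∫ y in Ω, gradNormSq n u y) * √(∫ y in Ω, ‖w y‖ ^ 2)) := by
  have norm_le : ∀ᵐ y ∂volume.restrict Ω, ‖y‖ ≤ R := by
    filter_upwards [ae_restrict_of_ae_restrict_of_subset hΩ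
      (ae_restrict_mem Metric.isClosed_closedBall.measurableSet)] with y hy
    exact mem_closedBall_zero_iff.1 hy
  have pointwise : ∀ᵐ y ∂volume.restrict Ω,
      ‖fderiv ℝ u y y * starRingEnd ℂ (w y)‖ ≤ R * (‖complexGrad u y‖ * ‖w y‖) := by
    filter_upwards [norm_le] with y hy
    rw [norm_mul, RCLike.norm_conj, ← mul_assoc]
    gcongr
    exact (norm_fderiv_apply_le_norm_mul_norm_complexGrad u y y).trans (by gcongr)
  simpa only [gradNormSq_eq_norm_complexGrad_sq] using
    norm_integral_le_mul_sqrt_mul_sqrt hu hw hR pointwise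

theorem norm_drift_le {γ B R : ℝ} (hγ : |γ| ≤ B) (hR : 0 ≤ R) (hΩ : Ω ⊆ Metric.closedBall 0 R)
    (hu : MemLp (complexGrad u) 2 (volume.restrict Ω)) (hw : MemLp w 2 (volume.restrict Ω)) :
    ‖Complex.I * (γ : ℂ) * ∫ y in Ω, fderiv ℝ u y y * starRingEnd ℂ (w y)‖ ≤
      B * R * (√(∫ y in Ω, gradNormSq n u y) * √(∫ y in Ω, ‖w y‖ ^ 2)) := by
  rw [norm_mul, norm_mul, Complex.norm_I, one_mul, Complex.norm_real, Real.norm_eq_abs, mul_assoc B]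
  exact mul_le_mul hγ (norm_integral_fderiv_mul_conj_le hR hΩ hu hw) (norm_nonneg _)
    ((abs_nonneg γ).trans hγ)

/-- The norm `‖u‖_{H¹} = (‖u‖²_{L²(Ω)} + ‖∇u‖²_{L²(Ω)})^{1/2}`, computed from the classical
gradient. -/
noncomputable def h1Norm (Ω : Set (EuclideanSpace ℝ (Fin n)))
    (u : EuclideanSpace ℝ (Fin n) → ℂ) : ℝ :=
  √((∫ y in Ω, ‖u y‖ ^ 2) + ∫ y in Ω, gradNormSq n u y)

theorem sqrt_integral_norm_sq_le_h1Norm (Ω : Set (EuclideanSpace ℝ (Fin n)))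
    (u : EuclideanSpace ℝ (Fin n) → ℂ) : √(∫ y in Ω, ‖u y‖ ^ 2) ≤ h1Norm Ω u :=
  Real.sqrt_le_sqrt (le_add_of_nonneg_right (integral_gradNormSq_nonneg Ω u))

theorem sqrt_integral_gradNormSq_le_h1Norm (Ω : Set (EuclideanSpace ℝ (Fin n)))
    (u : EuclideanSpace ℝ (Fin n) → ℂ) : √(∫ y in Ω, gradNormSq n u y) ≤ h1Norm Ω u :=
  Real.sqrt_le_sqrt (le_add_of_nonneg_left (integral_nonneg fun _ ↦ sq_nonneg _))

theorem norm_aL_le {γ B R : ℝ} (hγ : |γ| ≤ B) (hR : 0 ≤ R) (hΩ : Ω ⊆ Metric.closedBall 0 R)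
    (hu : MemLp (complexGrad u) 2 (volume.restrict Ω)) (hw : MemLp w 2 (volume.restrict Ω))
    (hw' : MemLp (complexGrad w) 2 (volume.restrict Ω)) :
    ‖aL n γ Ω u w‖ ≤ (1 + B * R) * h1Norm Ω u * h1Norm Ω w := by
  have hB : 0 ≤ B := (abs_nonneg γ).trans hγ
  have hu₁ := sqrt_integral_gradNormSq_le_h1Norm Ω u
  have hw₀ := sqrt_integral_norm_sq_le_h1Norm Ω w
  have hw₁ := sqrt_integral_gradNormSq_le_h1Norm Ω w
  have h1Norm_nonneg : 0 ≤ h1Norm Ω u := Real.sqrt_nonneg _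
  calc
    ‖aL n γ Ω u w‖
      ≤ √(∫ y in Ω, gradNormSq n u y) * √(∫ y in Ω, gradNormSq n w y) +
          B * R * (√(∫ y in Ω, gradNormSq n u y) * √(∫ y in Ω, ‖w y‖ ^ 2)) :=
        norm_add_le_of_le (norm_integral_gradDotConj_le hu hw') (norm_drift_le hγ hR hΩ hu hw)
    _ ≤ h1Norm Ω u * h1Norm Ω w + B * R * (h1Norm Ω u * h1Norm Ω w) := by gcongr
    _ = (1 + B * R) * h1Norm Ω u * h1Norm Ω w := by ring

theorem half_integral_gradNormSq_le_re_aL_add {γ B R : ℝ} (hγ : |γ| ≤ B) (hR : 0 ≤ R)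
    (hΩ : Ω ⊆ Metric.closedBall 0 R) (hu : MemLp u 2 (volume.restrict Ω))
    (hu' : MemLp (complexGrad u) 2 (volume.restrict Ω)) :
    1 / 2 * (∫ y in Ω, gradNormSq n u y) ≤
      (aL n γ Ω u u).re + (B * R) ^ 2 / 2 * ∫ y in Ω, ‖u y‖ ^ 2 := by
  set drift := Complex.I * (γ : ℂ) * ∫ y in Ω, fderiv ℝ u y y * starRingEnd ℂ (u y)
  set a := √(∫ y in Ω, gradNormSq n u y)
  set b := √(∫ y in Ω, ‖u y‖ ^ 2)
  have re_aL : (aL n γ Ω u u).re = (∫ y in Ω, gradNormSq n u y) + drift.re := by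
    rw [aL, integral_gradDotConj_self, Complex.add_re, Complex.ofReal_re]
  have drift_ge : -(B * R * (a * b)) ≤ drift.re :=
    (abs_le.1 ((Complex.abs_re_le_norm _).trans (norm_drift_le hγ hR hΩ hu' hu))).1
  have ha : a ^ 2 = ∫ y in Ω, gradNormSq n u y := Real.sq_sqrt (integral_gradNormSq_nonneg Ω u)
  have hb : b ^ 2 = ∫ y in Ω, ‖u y‖ ^ 2 := Real.sq_sqrt (integral_nonneg fun _ ↦ sq_nonneg _)
  have young : B * R * (a * b) ≤ a ^ 2 / 2 + (B * R) ^ 2 / 2 * b ^ 2 := by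
    linarith [two_mul_le_add_sq a (B * R * b)]
  rw [re_aL, ← ha, ← hb]
  linarith

/-- Membership in `H¹(Ω)` for classically differentiable functions. Differentiability on `Ω` is part
of the notion because `fderiv` is `0`, not the weak derivative, where it fails. -/
structure MemClassicalH1 (Ω : Set (EuclideanSpace ℝ (Fin n)))
    (u : EuclideanSpace ℝ (Fin n) → ℂ) : Prop where
  differentiableAt : ∀ y ∈ Ω, DifferentiableAt ℝ u y
  memLp : MemLp u 2 (volume.restrict Ω)
  memLp_complexGrad : MemLp (complexGrad u) 2 (volume.restrict Ω)

theorem memClassicalH1_of_contDiff (hΩ : Bornology.IsBounded Ω) (hu : ContDiff ℝ 1 u) :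
    MemClassicalH1 Ω u where
  differentiableAt _ _ := hu.differentiable one_ne_zero _
  memLp := memLp_restrict_of_continuous_of_isBounded hu.continuous hΩ 2
  memLp_complexGrad := memLp_restrict_of_continuous_of_isBounded (continuous_complexGrad hu) hΩ 2

theorem aL_continuous_and_garding_uniform_general (hΩ : Bornology.IsBounded Ω) (B : ℝ) :
    ∃ C > (0 : ℝ), ∃ lam > (0 : ℝ), ∀ γ : ℝ, |γ| ≤ B →
      ∀ u w : EuclideanSpace ℝ (Fin n) → ℂ, MemClassicalH1 Ω u → MemClassicalH1 Ω w →
        ‖aL n γ Ω u w‖ ≤ C * h1Norm Ω u * h1Norm Ω w ∧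
          1 / 2 * (∫ y in Ω, gradNormSq n u y) ≤
            (aL n γ Ω u u).re + lam * ∫ y in Ω, ‖u y‖ ^ 2 := by
  obtain ⟨R, hR, hΩR⟩ := hΩ.subset_closedBall_lt 0 0
  refine ⟨1 + |B| * R, by positivity, (|B| * R) ^ 2 / 2 + 1, by positivity,
    fun γ hγ u w hu hw ↦ ?_⟩
  have hγB : |γ| ≤ |B| := hγ.trans (le_abs_self B)
  refine ⟨norm_aL_le hγB hR.le hΩR hu.memLp_complexGrad hw.memLp hw.memLp_complexGrad, ?_⟩
  refine (half_integral_gradNormSq_le_re_aL_add hγB hR.le hΩR hu.memLp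
    hu.memLp_complexGrad).trans ?_
  gcongr
  exact le_add_of_nonneg_right zero_le_one

/-- Continuity and Gårding inequality for the sesquilinear form `a_L`,
uniformly in `t ∈ [0, T]`. -/
theorem aL_continuous_and_garding_uniform
    (n : ℕ) (Ω : Set (EuclideanSpace ℝ (Fin n)))
    (hΩo : IsOpen Ω) (hΩb : Bornology.IsBounded Ω)
    (T : ℝ) (hT : 0 < T) (k : ℝ → ℝ) (hk : ContDiffOn ℝ 1 k (Icc 0 T)) :
    ∃ C > (0 : ℝ), ∃ lam > (0 : ℝ), ∀ t ∈ Icc (0 : ℝ) T,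
      ∀ u w : EuclideanSpace ℝ (Fin n) → ℂ,
        ContDiff ℝ (⊤ : ℕ∞) u → HasCompactSupport u → tsupport u ⊆ Ω →
        ContDiff ℝ (⊤ : ℕ∞) w → HasCompactSupport w → tsupport w ⊆ Ω →
        ‖aL n (k t * deriv k t) Ω u w‖ ≤
            C * Real.sqrt ((∫ y in Ω, ‖u y‖ ^ 2) + ∫ y in Ω, gradNormSq n u y) *
              Real.sqrt ((∫ y in Ω, ‖w y‖ ^ 2) + ∫ y in Ω, gradNormSq n w y) ∧
          (1 / 2 : ℝ) * (∫ y in Ω, gradNormSq n u y) ≤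
            (aL n (k t * deriv k t) Ω u u).re + lam * ∫ y in Ω, ‖u y‖ ^ 2 := by
  obtain ⟨B, hB⟩ := exists_abs_mul_deriv_le isCompact_Icc (uniqueDiffOn_Icc hT) hk
  obtain ⟨C, hC, lam, hlam, h⟩ := aL_continuous_and_garding_uniform_general hΩb B
  have memH1 {v : EuclideanSpace ℝ (Fin n) → ℂ} (hv : ContDiff ℝ (⊤ : ℕ∞) v) :
      MemClassicalH1 Ω v :=
    memClassicalH1_of_contDiff hΩb (hv.of_le (mod_cast le_top))
  exact ⟨C, hC, lam, hlam, fun t ht u w hu _ _ hw _ _ ↦ h _ (hB t ht) u w (memH1 hu) (memH1 hw)⟩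
end

section
/- Let Ω ⊂ ℝⁿ be a bounded open set with d_Ω = sup{|y| : y ∈ Ω}, let t be fixed and γ(t) ∈ ℝ. Then for every u ∈ C_c^∞(Ω;ℂ) the explicit Gårding inequality holds: Re a_L(t;u,u) + ((d_Ω |γ(t)|)²/2)‖u‖²_{L²(Ω)} ≥ (1/2)‖∇u‖²_{L²(Ω)}. -/
open MeasureTheory Set

/-! No integration by parts is involved: since `‖y‖ ≤ d` on `Ω`, the drift term obeys the pointwise
bound `|γ (y·∇u) ū| ≤ |∇u| (d |γ| |u|)`, and by the inequality of arithmetic and geometric means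
half of `|∇u|²` and half of `(d |γ|)² |u|²` absorb it. -/

section LinearMap

variable {ι 𝕜 E F : Type*} [Fintype ι] [RCLike 𝕜]
  [NormedAddCommGroup E] [InnerProductSpace 𝕜 E] [SeminormedAddCommGroup F] [NormedSpace 𝕜 F]

theorem norm_map_sq_le_norm_sq_mul_sum_orthonormalBasis (b : OrthonormalBasis ι 𝕜 E)
    (f : E →ₗ[𝕜] F) (x : E) : ‖f x‖ ^ 2 ≤ ‖x‖ ^ 2 * ∑ i, ‖f (b i)‖ ^ 2 := by
  have norm_le_sum : ‖f x‖ ≤ ∑ i, ‖b.repr x i‖ * ‖f (b i)‖ := by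
    calc ‖f x‖ = ‖∑ i, b.repr x i • f (b i)‖ := by
          rw [← b.sum_repr x, map_sum, b.sum_repr]
          simp only [map_smul]
      _ ≤ ∑ i, ‖b.repr x i‖ * ‖f (b i)‖ := by
          simpa only [norm_smul] using norm_sum_le Finset.univ fun i => b.repr x i • f (b i)
  calc ‖f x‖ ^ 2 ≤ (∑ i, ‖b.repr x i‖ * ‖f (b i)‖) ^ 2 := by gcongr
    _ ≤ (∑ i, ‖b.repr x i‖ ^ 2) * ∑ i, ‖f (b i)‖ ^ 2 := Finset.sum_mul_sq_le_sq_mul_sq _ _ _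
    _ = ‖x‖ ^ 2 * ∑ i, ‖f (b i)‖ ^ 2 := by
          rw [← EuclideanSpace.norm_sq_eq, b.repr.norm_map]

end LinearMap

theorem norm_le_sSup_image_norm {E : Type*} [SeminormedAddGroup E] {s : Set E}
    (hs : Bornology.IsBounded s) {x : E} (hx : x ∈ s) : ‖x‖ ≤ sSup ((fun y => ‖y‖) '' s) := by
  obtain ⟨C, hC⟩ := hs.exists_norm_le
  exact le_csSup ⟨C, forall_mem_image.2 hC⟩ (mem_image_of_mem _ hx)

variable {n : ℕ} {Ω : Set (EuclideanSpace ℝ (Fin n))}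

theorem gradNormSq_nonneg (u : EuclideanSpace ℝ (Fin n) → ℂ) (y : EuclideanSpace ℝ (Fin n)) :
    0 ≤ gradNormSq n u y :=
  Finset.sum_nonneg fun _ _ => sq_nonneg _

theorem gradDotConj_self (u : EuclideanSpace ℝ (Fin n) → ℂ) (y : EuclideanSpace ℝ (Fin n)) :
    gradDotConj n u u y = gradNormSq n u y := by
  simp [gradDotConj, gradNormSq, Complex.mul_conj']

theorem norm_fderiv_apply_sq_le_norm_sq_mul_gradNormSq (u : EuclideanSpace ℝ (Fin n) → ℂ)
    (y v : EuclideanSpace ℝ (Fin n)) : ‖fderiv ℝ u y v‖ ^ 2 ≤ ‖v‖ ^ 2 * gradNormSq n u y := by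
  simpa [gradNormSq] using norm_map_sq_le_norm_sq_mul_sum_orthonormalBasis
    (EuclideanSpace.basisFun (Fin n) ℝ) (fderiv ℝ u y : EuclideanSpace ℝ (Fin n) →ₗ[ℝ] ℂ) v

theorem integrableOn_gradNormSq (hΩ : MeasurableSet Ω) {u : EuclideanSpace ℝ (Fin n) → ℂ}
    {u' : EuclideanSpace ℝ (Fin n) → EuclideanSpace ℝ (Fin n) →L[ℝ] ℂ}
    (hu : ∀ y ∈ Ω, HasFDerivAt u (u' y) y) (hu' : MemLp u' 2 (volume.restrict Ω)) :
    IntegrableOn (gradNormSq n u) Ω := by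
  have partial_sq_integrable (j : Fin n) :
      IntegrableOn (fun y => ‖u' y (EuclideanSpace.single j 1)‖ ^ 2) Ω :=
    (hu'.continuousLinearMap_comp
      (ContinuousLinearMap.apply ℝ ℂ (EuclideanSpace.single j 1))).integrable_norm_pow two_ne_zero
  have sum_integrable := integrable_finsetSum Finset.univ fun j _ => partial_sq_integrable j
  refine IntegrableOn.congr_fun sum_integrable (fun y hy => ?_) hΩ
  simp only [gradNormSq, (hu y hy).fderiv]

theorem norm_drift_le_half_gradNormSq_add {d : ℝ} {y : EuclideanSpace ℝ (Fin n)} (hy : ‖y‖ ≤ d)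
    (γ : ℝ) (u : EuclideanSpace ℝ (Fin n) → ℂ) :
    ‖Complex.I * (γ : ℂ) * (fderiv ℝ u y y * starRingEnd ℂ (u y))‖ ≤
      1 / 2 * gradNormSq n u y + (d * |γ|) ^ 2 / 2 * ‖u y‖ ^ 2 := by
  have radial_le : ‖fderiv ℝ u y y‖ ^ 2 ≤ d ^ 2 * gradNormSq n u y :=
    (norm_fderiv_apply_sq_le_norm_sq_mul_gradNormSq u y y).trans <| by
      gcongr
      exact gradNormSq_nonneg u y
  have drift_sq_le : ‖Complex.I * (γ : ℂ) * (fderiv ℝ u y y * starRingEnd ℂ (u y))‖ ^ 2 ≤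
      gradNormSq n u y * ((d * |γ|) ^ 2 * ‖u y‖ ^ 2) := by
    calc ‖Complex.I * (γ : ℂ) * (fderiv ℝ u y y * starRingEnd ℂ (u y))‖ ^ 2
        = |γ| ^ 2 * ‖u y‖ ^ 2 * ‖fderiv ℝ u y y‖ ^ 2 := by
          simp only [norm_mul, Complex.norm_I, Complex.norm_real, RCLike.norm_conj,
            Real.norm_eq_abs]
          ring
      _ ≤ |γ| ^ 2 * ‖u y‖ ^ 2 * (d ^ 2 * gradNormSq n u y) := by gcongr
      _ = gradNormSq n u y * ((d * |γ|) ^ 2 * ‖u y‖ ^ 2) := by ring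
  linarith [two_mul_le_add_of_sq_le_mul (gradNormSq_nonneg u y) (by positivity) drift_sq_le]

theorem re_aL_self (γ : ℝ) (Ω : Set (EuclideanSpace ℝ (Fin n)))
    (u : EuclideanSpace ℝ (Fin n) → ℂ) :
    (aL n γ Ω u u).re = (∫ y in Ω, gradNormSq n u y) +
      (∫ y in Ω, Complex.I * (γ : ℂ) * (fderiv ℝ u y y * starRingEnd ℂ (u y))).re := by
  simp only [aL, gradDotConj_self, integral_complex_ofReal, integral_const_mul, Complex.add_re,
    Complex.ofReal_re]

theorem aL_garding_explicit_general (hΩ : MeasurableSet Ω) {d : ℝ} (hd : ∀ y ∈ Ω, ‖y‖ ≤ d) (γ : ℝ)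
    {u : EuclideanSpace ℝ (Fin n) → ℂ}
    {u' : EuclideanSpace ℝ (Fin n) → EuclideanSpace ℝ (Fin n) →L[ℝ] ℂ}
    (hu : ∀ y ∈ Ω, HasFDerivAt u (u' y) y) (hu₂ : MemLp u 2 (volume.restrict Ω))
    (hu' : MemLp u' 2 (volume.restrict Ω)) :
    (1 / 2 : ℝ) * (∫ y in Ω, gradNormSq n u y) ≤
      (aL n γ Ω u u).re + ((d * |γ|) ^ 2 / 2) * ∫ y in Ω, ‖u y‖ ^ 2 := by
  have grad_integrable := (integrableOn_gradNormSq hΩ hu hu').const_mul (1 / 2)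
  have sq_integrable := (hu₂.integrable_norm_pow two_ne_zero).const_mul ((d * |γ|) ^ 2 / 2)
  have drift_le :
      ‖∫ y in Ω, Complex.I * (γ : ℂ) * (fderiv ℝ u y y * starRingEnd ℂ (u y))‖ ≤
        1 / 2 * (∫ y in Ω, gradNormSq n u y) + (d * |γ|) ^ 2 / 2 * ∫ y in Ω, ‖u y‖ ^ 2 := by
    rw [← integral_const_mul, ← integral_const_mul, ← integral_add grad_integrable sq_integrable]
    exact norm_integral_le_of_norm_le (grad_integrable.add sq_integrable) <|
      ae_restrict_of_forall_mem hΩ fun y hy => norm_drift_le_half_gradNormSq_add (hd y hy) γ u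
  rw [re_aL_self]
  linarith [neg_le_of_abs_le ((Complex.abs_re_le_norm _).trans drift_le)]

/-- Explicit Gårding inequality:
`Re a_L(t;u,u) + ((d_Ω |γ(t)|)² / 2) ‖u‖²_{L²} ≥ (1/2) ‖∇u‖²_{L²}`. -/
theorem aL_garding_explicit
    (n : ℕ) (Ω : Set (EuclideanSpace ℝ (Fin n)))
    (hΩo : IsOpen Ω) (hΩb : Bornology.IsBounded Ω)
    (dΩ : ℝ) (hdΩ : dΩ = sSup ((fun y => ‖y‖) '' Ω)) (γt : ℝ)
    (u : EuclideanSpace ℝ (Fin n) → ℂ)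
    (hu : ContDiff ℝ (⊤ : ℕ∞) u) (hucs : HasCompactSupport u) (husupp : tsupport u ⊆ Ω) :
    (1 / 2 : ℝ) * (∫ y in Ω, gradNormSq n u y) ≤
      (aL n γt Ω u u).re + ((dΩ * |γt|) ^ 2 / 2) * ∫ y in Ω, ‖u y‖ ^ 2 := by
  have hdiff : Differentiable ℝ u := hu.differentiable (by simp)
  have hu₂ : MemLp u 2 := hu.continuous.memLp_of_hasCompactSupport hucs
  have hu' : MemLp (fderiv ℝ u) 2 :=
    (hu.continuous_fderiv (by simp)).memLp_of_hasCompactSupport (hucs.fderiv ℝ)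
  exact aL_garding_explicit_general hΩo.measurableSet
    (fun y hy => hdΩ ▸ norm_le_sSup_image_norm hΩb hy) γt
    (fun y _ => (hdiff y).hasFDerivAt) (hu₂.restrict Ω) (hu'.restrict Ω)
end

section
/- Let E be a real or complex Banach space, let a < b be real numbers, and let f : [a,b] → E be three times continuously differentiable. Then ‖ (f(b) − f(a))/(b − a) − f'((a+b)/2) ‖ ≤ ((b − a)/8) ∫_a^b ‖f'''(t)‖ dt. (This is the second-order accuracy estimate for the Crank–Nicolson difference quotient at the interval midpoint.) -/
open Set intervalIntegral

/-!
The odd part of a function about the midpoint `m` of `[a, b]` has no quadratic term: with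
`h = (b - a) / 2`, subtracting the second-order Taylor expansions of `f (m + h)` and `f (m - h)`
at `m` leaves `f b - f a - 2 h f' m` equal to a difference of two remainders. The kernel
`(x - t) ^ 2 / 2` of each remainder is at most `h ^ 2 / 2`, and division by `2 h` produces the
constant `h / 4 = (b - a) / 8`. The remainders are only ever estimated in norm, through the
mean value inequality `‖g x - g x₀‖ ≤ ∫ ‖g'‖`, so no `E`-valued integral occurs.
-/

open MeasureTheory
open scoped Interval Nat

theorem hasDerivWithinAt_sum_taylor {𝕜 E : Type*} [NontriviallyNormedField 𝕜] [CharZero 𝕜]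
    [NormedAddCommGroup E] [NormedSpace 𝕜 E] {F : ℕ → 𝕜 → E} {s : Set 𝕜} {t : 𝕜} (x : 𝕜) {n : ℕ}
    (hF : ∀ k ≤ n, HasDerivWithinAt (F k) (F (k + 1) t) s t) :
    HasDerivWithinAt (fun u ↦ ∑ k ∈ Finset.range (n + 1), ((x - u) ^ k / (k ! : 𝕜)) • F k u)
      (((x - t) ^ n / (n ! : 𝕜)) • F (n + 1) t) s t := by
  induction n with
  | zero => simpa using hF 0 le_rfl
  | succ n ih =>
    have h_weight : HasDerivWithinAt (fun u ↦ (x - u) ^ (n + 1) / ((n + 1)! : 𝕜))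
        (-((x - t) ^ n / (n ! : 𝕜))) s t := by
      refine ((((hasDerivWithinAt_id t s).const_sub x).pow (n + 1)).div_const _).congr_deriv ?_
      have h_succ : (n + 1 : 𝕜) ≠ 0 := by exact_mod_cast n.succ_ne_zero
      have h_fact : (n ! : 𝕜) ≠ 0 := by exact_mod_cast n.factorial_ne_zero
      simp only [id, Nat.factorial_succ, Nat.cast_mul, Nat.cast_add, Nat.cast_one,
        Nat.add_sub_cancel]
      field_simp
    simp only [Finset.sum_range_succ _ (n + 1)]
    refine ((ih fun k hk ↦ hF k (hk.trans n.le_succ)).add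
      (h_weight.smul (hF (n + 1) le_rfl))).congr_deriv ?_
    module

section RealVariable

variable {E : Type*} [NormedAddCommGroup E] [NormedSpace ℝ E]

theorem norm_sub_le_setIntegral_uIoc_of_norm_deriv_le {f f' : ℝ → E} {B : ℝ → ℝ} {a b : ℝ}
    (hf : ContinuousOn f [[a, b]]) (hf' : ∀ t ∈ uIoo a b, HasDerivAt f (f' t) t)
    (hB : ∀ t ∈ uIoo a b, ‖f' t‖ ≤ B t) (hB_int : IntervalIntegrable B volume a b) :
    ‖f b - f a‖ ≤ ∫ t in Ι a b, B t := by
  wlog hab : a ≤ b generalizing a b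
  · rw [norm_sub_rev, uIoc_comm]
    rw [uIcc_comm] at hf
    rw [uIoo_comm] at hf' hB
    exact this hf hf' hB hB_int.symm (le_of_not_ge hab)
  rw [uIcc_of_le hab] at hf
  rw [uIoo_of_le hab] at hf' hB
  rw [uIoc_of_le hab, ← integral_of_le hab]
  exact norm_sub_le_integral_of_norm_deriv_le_of_le hab hf
    (fun t ht ↦ (hf' t ht).differentiableAt.differentiableWithinAt)
    (.of_forall fun t ht ↦ (hf' t ht).deriv ▸ hB t ht) hB_int

theorem norm_sub_sum_taylor_le {F : ℕ → ℝ → E} {s : Set ℝ} {x₀ x : ℝ} {n : ℕ}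
    (hs : [[x₀, x]] ⊆ s)
    (hF : ∀ k ≤ n, ∀ t ∈ s, HasDerivWithinAt (F k) (F (k + 1) t) s t)
    (hF_int : IntervalIntegrable (fun t ↦ ‖F (n + 1) t‖) volume x₀ x) :
    ‖F 0 x - ∑ k ∈ Finset.range (n + 1), ((x - x₀) ^ k / (k ! : ℝ)) • F k x₀‖ ≤
      |x - x₀| ^ n / n ! * ∫ t in Ι x₀ x, ‖F (n + 1) t‖ := by
  let G : ℝ → E := fun t ↦ ∑ k ∈ Finset.range (n + 1), ((x - t) ^ k / (k ! : ℝ)) • F k t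
  have hG : ∀ t ∈ s, HasDerivWithinAt G (((x - t) ^ n / (n ! : ℝ)) • F (n + 1) t) s t :=
    fun t ht ↦ hasDerivWithinAt_sum_taylor x fun k hk ↦ hF k hk t ht
  have hGx : G x = F 0 x := by simp [G, Finset.sum_range_succ']
  have h_kernel : ∀ t ∈ uIoo x₀ x,
      ‖((x - t) ^ n / (n ! : ℝ)) • F (n + 1) t‖ ≤ |x - x₀| ^ n / n ! * ‖F (n + 1) t‖ := by
    intro t ht
    have h_dist : |x - t| ≤ |x - x₀| := abs_sub_right_of_mem_uIcc (uIoo_subset_uIcc_self ht)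
    rw [norm_smul, norm_div, norm_pow, Real.norm_eq_abs, Real.norm_natCast]
    gcongr
  rw [← hGx, ← MeasureTheory.integral_const_mul]
  exact norm_sub_le_setIntegral_uIoc_of_norm_deriv_le
    (fun t ht ↦ (hG t (hs ht)).continuousWithinAt.mono hs)
    (fun t ht ↦ (hG t (hs (uIoo_subset_uIcc_self ht))).hasDerivAt
      (Filter.mem_of_superset (isOpen_Ioo.mem_nhds ht) (uIoo_subset_uIcc_self.trans hs)))
    h_kernel (hF_int.const_mul _)

theorem norm_sub_taylor_two_le {f f' f'' f''' : ℝ → E} {s : Set ℝ} {x₀ x : ℝ}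
    (hs : [[x₀, x]] ⊆ s)
    (hf : ∀ t ∈ s, HasDerivWithinAt f (f' t) s t)
    (hf' : ∀ t ∈ s, HasDerivWithinAt f' (f'' t) s t)
    (hf'' : ∀ t ∈ s, HasDerivWithinAt f'' (f''' t) s t)
    (hf''' : IntervalIntegrable (fun t ↦ ‖f''' t‖) volume x₀ x) :
    ‖f x - (f x₀ + (x - x₀) • f' x₀ + ((x - x₀) ^ 2 / 2) • f'' x₀)‖ ≤
      (x - x₀) ^ 2 / 2 * ∫ t in Ι x₀ x, ‖f''' t‖ := by
  let F : ℕ → ℝ → E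
    | 0 => f
    | 1 => f'
    | 2 => f''
    | _ => f'''
  have hF : ∀ k ≤ 2, ∀ t ∈ s, HasDerivWithinAt (F k) (F (k + 1) t) s t := by
    intro k hk
    interval_cases k
    exacts [hf, hf', hf'']
  simpa [F, Finset.sum_range_succ] using norm_sub_sum_taylor_le hs hF hf'''

theorem norm_sub_sub_smul_deriv_midpoint_le {f f' f'' f''' : ℝ → E} {a b : ℝ} (hab : a ≤ b)
    (hf : ∀ t ∈ Icc a b, HasDerivWithinAt f (f' t) (Icc a b) t)
    (hf' : ∀ t ∈ Icc a b, HasDerivWithinAt f' (f'' t) (Icc a b) t)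
    (hf'' : ∀ t ∈ Icc a b, HasDerivWithinAt f'' (f''' t) (Icc a b) t)
    (hf''' : IntervalIntegrable (fun t ↦ ‖f''' t‖) volume a b) :
    ‖f b - f a - (b - a) • f' ((a + b) / 2)‖ ≤ (b - a) ^ 2 / 8 * ∫ t in a..b, ‖f''' t‖ := by
  set m := (a + b) / 2 with hm
  have ham : a ≤ m := by linarith
  have hmb : m ≤ b := by linarith
  have hs_left : [[m, a]] ⊆ Icc a b := uIcc_of_ge ham ▸ Icc_subset_Icc_right hmb
  have hs_right : [[m, b]] ⊆ Icc a b := uIcc_of_le hmb ▸ Icc_subset_Icc_left ham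
  have h_int_left : IntervalIntegrable (fun t ↦ ‖f''' t‖) volume m a :=
    hf'''.mono_set (uIcc_of_le hab ▸ hs_left)
  have h_int_right : IntervalIntegrable (fun t ↦ ‖f''' t‖) volume m b :=
    hf'''.mono_set (uIcc_of_le hab ▸ hs_right)
  have h_left := norm_sub_taylor_two_le hs_left hf hf' hf'' h_int_left
  have h_right := norm_sub_taylor_two_le hs_right hf hf' hf'' h_int_right
  rw [uIoc_of_ge ham, ← integral_of_le ham, show a - m = -((b - a) / 2) by ring] at h_left
  rw [uIoc_of_le hmb, ← integral_of_le hmb, show b - m = (b - a) / 2 by ring] at h_right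
  set h := (b - a) / 2 with hh
  calc ‖f b - f a - (b - a) • f' m‖
      = ‖(f b - (f m + h • f' m + (h ^ 2 / 2) • f'' m)) -
          (f a - (f m + (-h) • f' m + ((-h) ^ 2 / 2) • f'' m))‖ := by
        congr 1
        rw [hh]
        module
    _ ≤ h ^ 2 / 2 * (∫ t in m..b, ‖f''' t‖) + (-h) ^ 2 / 2 * ∫ t in a..m, ‖f''' t‖ :=
        (norm_sub_le _ _).trans (add_le_add h_right h_left)
    _ = (b - a) ^ 2 / 8 * ∫ t in a..b, ‖f''' t‖ := by
        rw [← integral_add_adjacent_intervals h_int_left.symm h_int_right, hh]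
        ring

theorem crank_nicolson_difference_quotient_estimate_general {f f' f'' f''' : ℝ → E} {a b : ℝ}
    (hab : a < b)
    (hf : ∀ t ∈ Icc a b, HasDerivWithinAt f (f' t) (Icc a b) t)
    (hf' : ∀ t ∈ Icc a b, HasDerivWithinAt f' (f'' t) (Icc a b) t)
    (hf'' : ∀ t ∈ Icc a b, HasDerivWithinAt f'' (f''' t) (Icc a b) t)
    (hf''' : IntervalIntegrable (fun t ↦ ‖f''' t‖) volume a b) :
    ‖(b - a)⁻¹ • (f b - f a) - f' ((a + b) / 2)‖ ≤
      ((b - a) / 8) * ∫ t in a..b, ‖f''' t‖ := by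
  have h_pos : 0 < b - a := sub_pos.mpr hab
  calc ‖(b - a)⁻¹ • (f b - f a) - f' ((a + b) / 2)‖
      = (b - a)⁻¹ * ‖f b - f a - (b - a) • f' ((a + b) / 2)‖ := by
        rw [← norm_smul_of_nonneg (inv_nonneg.mpr h_pos.le), smul_sub _ (f b - f a),
          inv_smul_smul₀ h_pos.ne']
    _ ≤ (b - a)⁻¹ * ((b - a) ^ 2 / 8 * ∫ t in a..b, ‖f''' t‖) := by
        gcongr
        exact norm_sub_sub_smul_deriv_midpoint_le hab.le hf hf' hf'' hf'''
    _ = (b - a) / 8 * ∫ t in a..b, ‖f''' t‖ := by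
        field_simp

end RealVariable

/-- Second-order accuracy of the Crank–Nicolson difference quotient at the midpoint:
`‖(f(b) - f(a))/(b - a) - f'((a+b)/2)‖ ≤ ((b - a)/8) ∫_a^b ‖f'''(t)‖ dt`
for `f : [a,b] → E` three times continuously differentiable. -/
theorem crank_nicolson_difference_quotient_estimate
    {E : Type*} [NormedAddCommGroup E] [NormedSpace ℝ E] [CompleteSpace E]
    (a b : ℝ) (hab : a < b) (f f' f'' f''' : ℝ → E)
    (hf : ∀ t ∈ Icc a b, HasDerivWithinAt f (f' t) (Icc a b) t)
    (hf' : ∀ t ∈ Icc a b, HasDerivWithinAt f' (f'' t) (Icc a b) t)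
    (hf'' : ∀ t ∈ Icc a b, HasDerivWithinAt f'' (f''' t) (Icc a b) t)
    (hf''' : ContinuousOn f''' (Icc a b)) :
    ‖(b - a)⁻¹ • (f b - f a) - f' ((a + b) / 2)‖ ≤
      ((b - a) / 8) * ∫ t in a..b, ‖f''' t‖ :=
  crank_nicolson_difference_quotient_estimate_general hab hf hf' hf''
    (hf'''.norm.intervalIntegrable_of_Icc hab.le)
end
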